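/- arXiv:1609.04874 — 2 statements merged into one kernel-verified Lean document; each statement's English description precedes it below -/
import Mathlib

section
/- Let G be a group and let S₂, S₁, S₀ be G-sets on which G acts freely and with finitely many orbits. Let φ : ℤ[S₂] → ℤ[S₁] and ψ : ℤ[S₁] → ℤ[S₀] be G-equivariant additive homomorphisms such that ψ ∘ φ = 0 and ker ψ ⊆ im φ. Then for every natural number n there exists a natural number B such that every x ∈ ℤ[S₁] with ψ(x) = 0 and ‖x‖_{S₁} ≤ n admits y ∈ ℤ[S₂] with φ(y) = x and ‖y‖_{S₂} ≤ B. (This is the statement that the (d+1)-dimensional filling function FV_M^{d+1} of a ℤG-module M of type FP_{d+1} takes only finite values, expressed via a partial resolution of M by finitely generated free ℤG-modules, which are exactly permutation modules on free G-sets with finitely many orbits.) -/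
open Finsupp

/-- Action of `g : G` on the permutation module `ℤ[S]`, permuting the basis. -/
def gact {G S : Type*} [Group G] [MulAction G S] (g : G) (x : S →₀ ℤ) : S →₀ ℤ :=
  Finsupp.equivMapDomain (MulAction.toPerm g) x

/-- The ℓ1-norm on `ℤ[S]`. -/
def l1 {S : Type*} (x : S →₀ ℤ) : ℕ := x.support.sum fun s => (x s).natAbs

/-- `x` is a part of `y`, written `x ⪯_S y`. -/
def IsPart {S : Type*} (x y : S →₀ ℤ) : Prop := ∀ s, x s ^ 2 ≤ x s * y s

/-- `x` and `y` have trivial S-intersection. -/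
def SIntTrivial {S : Type*} (x y : S →₀ ℤ) : Prop := ∀ s, 0 ≤ x s * y s

/-- membership in `D₁ = S ∪ (-S) ⊆ ℤ[S]`. -/
def InD1 {S : Type*} (x : S →₀ ℤ) : Prop :=
  ∃ s, x = Finsupp.single s 1 ∨ x = Finsupp.single s (-1)

/-- `x` and `y` have nontrivial ρ-intersection. -/
def RhoInt {S T : Type*} (ρ : (S →₀ ℤ) →+ (T →₀ ℤ)) (x y : S →₀ ℤ) : Prop :=
  ∃ x₁ y₁, InD1 x₁ ∧ InD1 y₁ ∧ IsPart x₁ x ∧ IsPart y₁ y ∧ ∃ t, ρ x₁ t * ρ y₁ t < 0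

/-- membership in `D_n`. -/
def InD {S T : Type*} (ρ : (S →₀ ℤ) →+ (T →₀ ℤ)) (n : ℕ) (x : S →₀ ℤ) : Prop :=
  ∃ c : ℕ → (S →₀ ℤ), (∀ i < n, InD1 (c i)) ∧ x = ∑ i ∈ Finset.range n, c i ∧
    ∀ k, 1 ≤ k → k < n →
      SIntTrivial (∑ i ∈ Finset.range k, c i) (c k) ∧
      RhoInt ρ (∑ i ∈ Finset.range k, c i) (c k)

/-- `x` is ρ-connected. -/
def RhoConnected {S T : Type*} (ρ : (S →₀ ℤ) →+ (T →₀ ℤ)) (x : S →₀ ℤ) : Prop :=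
  ∃ n, 1 ≤ n ∧ InD ρ n x

/-- `ρ` is G-equivariant. -/
def Equivariant (G : Type*) {S T : Type*} [Group G] [MulAction G S] [MulAction G T]
    (ρ : (S →₀ ℤ) →+ (T →₀ ℤ)) : Prop :=
  ∀ (g : G) (x : S →₀ ℤ), ρ (gact g x) = gact g (ρ x)

/-- `S` has finitely many G-orbits. -/
def FinitelyManyOrbits (G S : Type*) [Group G] [MulAction G S] : Prop :=
  ∃ R : Finset S, ∀ s : S, ∃ (g : G) (r : S), r ∈ R ∧ g • r = s

/-- every element of `T` has finite stabilizer. -/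
def FiniteStabilizers (G T : Type*) [Group G] [MulAction G T] : Prop :=
  ∀ t : T, {g : G | g • t = t}.Finite

/-!
Say that two basis elements of `ℤ[S₁]` overlap if the supports of their images under `ψ` meet.
Finite stabilizers on `S₀` and finitely many orbits on `S₁` make this relation locally finite.
If `R` is a finite set of orbit representatives, the balls around `R` for this relation are
therefore finite, and a cycle `x` with at most `n` basis elements in its support misses one of the
first `n + 1` spheres. Cutting `x` along that sphere cancels nothing under `ψ`, so the part of `x`
inside is again a cycle. Hence, up to translation, finitely many nonzero cycles suffice to supply
every nonzero cycle of norm at most `n` with a part; fill these, and peel them off one by one.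
-/

section L1Norm

variable {S : Type*}

theorem l1_eq_sum_of_support_subset {x : S →₀ ℤ} {F : Finset S} (h : x.support ⊆ F) :
    l1 x = ∑ s ∈ F, (x s).natAbs :=
  Finsupp.sum_of_support_subset x h (fun _ c => c.natAbs) fun _ _ => Int.natAbs_zero

theorem natAbs_apply_le_l1 (x : S →₀ ℤ) (s : S) : (x s).natAbs ≤ l1 x := by
  by_cases hs : s ∈ x.support
  · exact Finset.single_le_sum (f := fun s => (x s).natAbs) (fun _ _ => Nat.zero_le _) hs
  · simp [Finsupp.notMem_support_iff.1 hs]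

theorem card_support_le_l1 (x : S →₀ ℤ) : x.support.card ≤ l1 x := by
  rw [l1, Finset.card_eq_sum_ones]
  exact Finset.sum_le_sum fun s hs => Int.natAbs_pos.2 (Finsupp.mem_support_iff.1 hs)

theorem l1_zero : l1 (0 : S →₀ ℤ) = 0 := rfl

theorem l1_eq_zero {x : S →₀ ℤ} : l1 x = 0 ↔ x = 0 := by
  refine ⟨fun h => ?_, fun h => h ▸ l1_zero⟩
  ext s
  exact Int.natAbs_eq_zero.1 (Nat.le_zero.1 (h ▸ natAbs_apply_le_l1 x s))

theorem l1_add_le (x y : S →₀ ℤ) : l1 (x + y) ≤ l1 x + l1 y := by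
  classical
  rw [l1_eq_sum_of_support_subset Finsupp.support_add,
    l1_eq_sum_of_support_subset (x := x) Finset.subset_union_left,
    l1_eq_sum_of_support_subset (x := y) Finset.subset_union_right, ← Finset.sum_add_distrib]
  exact Finset.sum_le_sum fun s _ => Int.natAbs_add_le (x s) (y s)

theorem finite_setOf_support_subset_l1_le {F : Set S} (hF : F.Finite) (n : ℕ) :
    {x : S →₀ ℤ | (x.support : Set S) ⊆ F ∧ l1 x ≤ n}.Finite := by
  classical
  refine (hF.toFinset.finsupp fun _ => Finset.Icc (-n : ℤ) n).finite_toSet.subset ?_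
  rintro x ⟨hxF, hxn⟩
  refine Finset.mem_finsupp_iff.2 ⟨fun s hs => hF.mem_toFinset.2 (hxF hs), fun s _ => ?_⟩
  have := natAbs_apply_le_l1 x s
  rw [Finset.mem_Icc]
  omega

end L1Norm

section IsPart

variable {S : Type*}

theorem isPart_filter (x : S →₀ ℤ) (p : S → Prop) [DecidablePred p] : IsPart (x.filter p) x := by
  intro s
  by_cases hs : p s <;> simp [hs, sq]

theorem IsPart.natAbs_apply_sub_add {x z : S →₀ ℤ} (h : IsPart z x) (s : S) :
    ((x - z) s).natAbs + (z s).natAbs = (x s).natAbs := by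
  have hs : z s * z s ≤ z s * x s := sq (z s) ▸ h s
  rw [Finsupp.sub_apply]
  rcases lt_trichotomy (z s) 0 with hneg | hzero | hpos
  · have := (mul_le_mul_left_of_neg hneg).1 hs
    omega
  · simp [hzero]
  · have := le_of_mul_le_mul_left hs hpos
    omega

theorem IsPart.l1_sub_add_l1 {x z : S →₀ ℤ} (h : IsPart z x) : l1 (x - z) + l1 z = l1 x := by
  classical
  let F := x.support ∪ z.support
  have hsub : (x - z).support ⊆ F := Finsupp.support_sub
  rw [l1_eq_sum_of_support_subset hsub,
    l1_eq_sum_of_support_subset (F := F) (x := x) Finset.subset_union_left,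
    l1_eq_sum_of_support_subset (F := F) (x := z) Finset.subset_union_right,
    ← Finset.sum_add_distrib]
  exact Finset.sum_congr rfl fun s _ => h.natAbs_apply_sub_add s

end IsPart

section Action

variable {G S : Type*} [Group G] [MulAction G S]

theorem gact_apply (g : G) (x : S →₀ ℤ) (s : S) : gact g x s = x (g⁻¹ • s) := rfl

theorem gact_zero (g : G) : gact g (0 : S →₀ ℤ) = 0 :=
  Finsupp.equivMapDomain_zero

theorem gact_single (g : G) (s : S) (c : ℤ) :
    gact g (Finsupp.single s c) = Finsupp.single (g • s) c :=
  Finsupp.equivMapDomain_single _ s c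

theorem gact_gact_inv (g : G) (x : S →₀ ℤ) : gact g (gact g⁻¹ x) = x := by
  ext s
  simp only [gact_apply, inv_inv, smul_inv_smul]

theorem l1_gact (g : G) (x : S →₀ ℤ) : l1 (gact g x) = l1 x :=
  Finsupp.sum_equivMapDomain (MulAction.toPerm g) x fun _ c => c.natAbs

theorem IsPart.gact {x z : S →₀ ℤ} (h : IsPart z x) (g : G) : IsPart (gact g z) (gact g x) :=
  fun s => h (g⁻¹ • s)

theorem FiniteStabilizers.of_free (hfree : ∀ g : G, g ≠ 1 → ∀ s : S, g • s ≠ s) :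
    FiniteStabilizers G S := fun s =>
  (Set.finite_singleton 1).subset fun g hg => by_contra fun hne => hfree g hne s hg

theorem FiniteStabilizers.finite_setOf_smul_eq (hstab : FiniteStabilizers G S) (s t : S) :
    {g : G | g • s = t}.Finite := by
  rcases Set.eq_empty_or_nonempty {g : G | g • s = t} with hempty | ⟨g₀, hg₀ : g₀ • s = t⟩
  · exact hempty ▸ Set.finite_empty
  · refine ((hstab s).image (g₀ * ·)).subset fun g (hg : g • s = t) => ⟨g₀⁻¹ * g, ?_, ?_⟩
    · rw [Set.mem_ofPred_eq, mul_smul, hg, ← hg₀, inv_smul_smul]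
    · exact mul_inv_cancel_left g₀ g

end Action

section Overlap

variable {S T : Type*} {ψ : (S →₀ ℤ) →+ (T →₀ ℤ)}

theorem map_eq_sum_smul_single {M : Type*} [AddCommGroup M] (f : (S →₀ ℤ) →+ M) (x : S →₀ ℤ) :
    f x = x.sum fun s c => c • f (Finsupp.single s 1) := by
  conv_lhs => rw [← Finsupp.sum_single x, map_finsuppSum]
  simp only [← map_zsmul, Finsupp.smul_single_one]

theorem exists_apply_single_ne_zero {x : S →₀ ℤ} {t : T} (h : ψ x t ≠ 0) :
    ∃ s ∈ x.support, ψ (Finsupp.single s 1) t ≠ 0 := by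
  rw [map_eq_sum_smul_single, Finsupp.sum, Finsupp.finsetSum_apply] at h
  obtain ⟨s, hs, hst⟩ := Finset.exists_ne_zero_of_sum_ne_zero h
  exact ⟨s, hs, right_ne_zero_of_mul hst⟩

/-- The matrix of `ψ` with respect to the bases `S` and `T` has finitely many nonzero entries in
each row, rows being indexed by `T`. -/
def RowFinite (ψ : (S →₀ ℤ) →+ (T →₀ ℤ)) : Prop :=
  ∀ t, {s : S | ψ (Finsupp.single s 1) t ≠ 0}.Finite

theorem Equivariant.rowFinite {G : Type*} [Group G] [MulAction G S] [MulAction G T]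
    (hψ : Equivariant G ψ) (horb : FinitelyManyOrbits G S) (hstab : FiniteStabilizers G T) :
    RowFinite ψ := by
  intro t
  obtain ⟨R, hR⟩ := horb
  have hfin : (⋃ r ∈ R, ⋃ u ∈ (ψ (Finsupp.single r 1)).support,
      (fun g : G => g • r) '' {g | g • u = t}).Finite :=
    R.finite_toSet.biUnion fun r _ => (Finset.finite_toSet _).biUnion fun u _ =>
      (hstab.finite_setOf_smul_eq u t).image _
  refine hfin.subset fun s hs => ?_
  obtain ⟨g, r, hr, rfl⟩ := hR s
  rw [Set.mem_ofPred_eq, ← gact_single, hψ, gact_apply, ← Finsupp.mem_support_iff] at hs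
  simp only [Set.mem_iUnion]
  exact ⟨r, hr, g⁻¹ • t, hs, g, smul_inv_smul g t, rfl⟩

/-- The closed `1`-neighbourhood of `F` in the graph on `S` joining two basis elements when the
supports of their images under `ψ` meet. -/
def overlapThickening (ψ : (S →₀ ℤ) →+ (T →₀ ℤ)) (F : Set S) : Set S :=
  F ∪ {s' | ∃ s ∈ F, ∃ t, ψ (Finsupp.single s 1) t ≠ 0 ∧ ψ (Finsupp.single s' 1) t ≠ 0}

theorem subset_overlapThickening (F : Set S) : F ⊆ overlapThickening ψ F :=
  Set.subset_union_left

theorem RowFinite.overlapThickening_finite (hψ : RowFinite ψ) {F : Set S} (hF : F.Finite) :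
    (overlapThickening ψ F).Finite := by
  have hfin : (⋃ s ∈ F, ⋃ t ∈ (ψ (Finsupp.single s 1)).support,
      {s' | ψ (Finsupp.single s' 1) t ≠ 0}).Finite :=
    hF.biUnion fun s _ => (Finset.finite_toSet _).biUnion fun t _ => hψ t
  refine hF.union (hfin.subset ?_)
  rintro s' ⟨s, hs, t, hst, hst'⟩
  simp only [Set.mem_iUnion]
  exact ⟨s, hs, t, Finsupp.mem_support_iff.2 hst, hst'⟩

theorem map_filter_eq_zero_of_overlapThickening {x : S →₀ ℤ} (hx : ψ x = 0) {F : Set S}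
    [DecidablePred (· ∈ F)] (h : ↑x.support ∩ overlapThickening ψ F ⊆ F) :
    ψ (x.filter (· ∈ F)) = 0 := by
  ext t
  by_contra hin
  have hsum : ψ (x.filter (· ∈ F)) t + ψ (x.filter (· ∉ F)) t = 0 := by
    rw [← Finsupp.add_apply, ← map_add, Finsupp.filter_add_filter_not, hx, Finsupp.zero_apply]
  have hout : ψ (x.filter (· ∉ F)) t ≠ 0 := fun hzero => hin (by simpa [hzero] using hsum)
  obtain ⟨s, hs, hst⟩ := exists_apply_single_ne_zero hin
  obtain ⟨s', hs', hst'⟩ := exists_apply_single_ne_zero hout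
  rw [Finsupp.support_filter, Finset.mem_filter] at hs hs'
  exact hs'.2 (h ⟨hs'.1, Or.inr ⟨s, hs.2, t, hst, hst'⟩⟩)

theorem exists_le_card_inter_succ_subset (A : Finset S) {F : ℕ → Set S} (hF : Monotone F) :
    ∃ k ≤ A.card, ↑A ∩ F (k + 1) ⊆ F k := by
  classical
  by_contra! hstep
  have hgrow : ∀ k ≤ A.card + 1, k ≤ (A.filter (· ∈ F k)).card := by
    intro k
    induction k with
    | zero => exact fun _ => Nat.zero_le _
    | succ k ih =>
      intro hk
      obtain ⟨s, ⟨hsA, hsF⟩, hsk⟩ := Set.not_subset.1 (hstep k (by omega))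
      refine (ih (by omega)).trans_lt (Finset.card_lt_card (Finset.ssubset_iff_of_subset ?_ |>.2
        ⟨s, Finset.mem_filter.2 ⟨hsA, hsF⟩, fun hs => hsk (Finset.mem_filter.1 hs).2⟩))
      exact Finset.monotone_filter_right A fun _ _ hs => hF k.le_succ hs
  exact absurd (hgrow _ le_rfl) (Nat.not_le.2 (Nat.lt_succ_of_le (Finset.card_filter_le _ _)))

theorem RowFinite.exists_isPart_cycle (hψ : RowFinite ψ) {R : Set S} (hR : R.Finite) (n : ℕ) :
    ∃ F : Set S, F.Finite ∧ ∀ x : S →₀ ℤ, ψ x = 0 → x.support.card ≤ n →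
      ∃ z, IsPart z x ∧ ψ z = 0 ∧ ↑z.support ⊆ F ∧ ∀ r ∈ R, z r = x r := by
  classical
  let ball (k : ℕ) : Set S := (overlapThickening ψ)^[k] R
  have hsucc (k : ℕ) : ball (k + 1) = overlapThickening ψ (ball k) :=
    Function.iterate_succ_apply' _ k R
  have hmono : Monotone ball :=
    monotone_nat_of_le_succ fun k => hsucc k ▸ subset_overlapThickening (ball k)
  have hfin (k : ℕ) : (ball k).Finite := by
    induction k with
    | zero => exact hR
    | succ k ih => exact hsucc k ▸ hψ.overlapThickening_finite ih
  refine ⟨ball n, hfin n, fun x hx hcard => ?_⟩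
  obtain ⟨k, hk, hgap⟩ := exists_le_card_inter_succ_subset x.support hmono
  refine ⟨x.filter (· ∈ ball k), isPart_filter x _,
    map_filter_eq_zero_of_overlapThickening hx (hsucc k ▸ hgap), fun s hs => ?_, fun r hr => ?_⟩
  · rw [Finsupp.support_filter, Finset.mem_coe, Finset.mem_filter] at hs
    exact hmono (hk.trans hcard) hs.2
  · exact Finsupp.filter_apply_pos _ x (hmono k.zero_le hr)

theorem Equivariant.exists_finite_cycles_isPart {G : Type*} [Group G] [MulAction G S]
    [MulAction G T] (hψ : Equivariant G ψ) (horb : FinitelyManyOrbits G S)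
    (hstab : FiniteStabilizers G T) (n : ℕ) :
    ∃ Z : Set (S →₀ ℤ), Z.Finite ∧ (∀ z ∈ Z, ψ z = 0 ∧ z ≠ 0) ∧
      ∀ x, ψ x = 0 → x ≠ 0 → l1 x ≤ n → ∃ g : G, ∃ z ∈ Z, IsPart (gact g z) x := by
  have hrow := hψ.rowFinite horb hstab
  obtain ⟨R, hR⟩ := horb
  obtain ⟨F, hF, hcut⟩ := hrow.exists_isPart_cycle R.finite_toSet n
  refine ⟨{z | ↑z.support ⊆ F ∧ l1 z ≤ n} ∩ {z | ψ z = 0 ∧ z ≠ 0},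
    (finite_setOf_support_subset_l1_le hF n).inter_of_left _, fun _ hz => hz.2,
    fun x hx hx₀ hxn => ?_⟩
  obtain ⟨s, hs⟩ := Finsupp.ne_iff.1 hx₀
  obtain ⟨g, r, hr, rfl⟩ := hR s
  let x' := gact g⁻¹ x
  have hx' : ψ x' = 0 := by rw [hψ, hx, gact_zero]
  have hx'n : l1 x' ≤ n := (l1_gact g⁻¹ x).trans_le hxn
  have hx'r : x' r ≠ 0 := by rwa [gact_apply, inv_inv]
  obtain ⟨z, hzx', hz, hzF, hzR⟩ := hcut x' hx' ((card_support_le_l1 x').trans hx'n)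
  have hzn : l1 z ≤ n := (Nat.le_add_left _ _).trans (hzx'.l1_sub_add_l1.trans_le hx'n)
  have hz₀ : z ≠ 0 := fun h => hx'r (by rw [← hzR r hr, h, Finsupp.zero_apply])
  exact ⟨g, z, ⟨⟨hzF, hzn⟩, hz, hz₀⟩, gact_gact_inv g x ▸ hzx'.gact g⟩

end Overlap

section Filling

variable {S T : Type*} {φ : (S →₀ ℤ) →+ (T →₀ ℤ)}

/-- `x` has a `φ`-filling, that is, a preimage under `φ`, of ℓ1-norm at most `B`. -/
def HasFilling (φ : (S →₀ ℤ) →+ (T →₀ ℤ)) (B : ℕ) (x : T →₀ ℤ) : Prop :=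
  ∃ y, φ y = x ∧ l1 y ≤ B

theorem HasFilling.zero (φ : (S →₀ ℤ) →+ (T →₀ ℤ)) (B : ℕ) : HasFilling φ B 0 :=
  ⟨0, map_zero φ, l1_zero.trans_le B.zero_le⟩

theorem HasFilling.add {B B' : ℕ} {x x' : T →₀ ℤ} (h : HasFilling φ B x)
    (h' : HasFilling φ B' x') : HasFilling φ (B + B') (x + x') := by
  obtain ⟨y, rfl, hy⟩ := h
  obtain ⟨y', rfl, hy'⟩ := h'
  exact ⟨y + y', map_add φ y y', (l1_add_le y y').trans (Nat.add_le_add hy hy')⟩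

theorem HasFilling.gact {G : Type*} [Group G] [MulAction G S] [MulAction G T]
    (hφ : Equivariant G φ) {B : ℕ} {x : T →₀ ℤ} (h : HasFilling φ B x) (g : G) :
    HasFilling φ B (gact g x) := by
  obtain ⟨y, rfl, hy⟩ := h
  exact ⟨_root_.gact g y, hφ g y, (l1_gact g y).trans_le hy⟩

theorem exists_forall_hasFilling_of_finite {Z : Set (T →₀ ℤ)} (hZ : Z.Finite)
    (hφ : ∀ z ∈ Z, ∃ y, φ y = z) : ∃ B, ∀ z ∈ Z, HasFilling φ B z := by
  choose! fill hfill using hφ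
  obtain ⟨B, hB⟩ := (hZ.image fun z => l1 (fill z)).bddAbove
  exact ⟨B, fun z hz => ⟨fill z, hfill z hz, hB ⟨z, hz, rfl⟩⟩⟩

end Filling

theorem stmt_0_general {G S₂ S₁ S₀ : Type*} [Group G]
    [MulAction G S₂] [MulAction G S₁] [MulAction G S₀]
    (hstab₀ : FiniteStabilizers G S₀) (horb₁ : FinitelyManyOrbits G S₁)
    (φ : (S₂ →₀ ℤ) →+ (S₁ →₀ ℤ)) (ψ : (S₁ →₀ ℤ) →+ (S₀ →₀ ℤ))
    (hφ : Equivariant G φ) (hψ : Equivariant G ψ)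
    (hexact : ∀ x : S₁ →₀ ℤ, ψ x = 0 → ∃ y : S₂ →₀ ℤ, φ y = x) (n : ℕ) :
    ∃ B : ℕ, ∀ x : S₁ →₀ ℤ, ψ x = 0 → l1 x ≤ n → HasFilling φ B x := by
  obtain ⟨Z, hZfin, hZ, hpart⟩ := hψ.exists_finite_cycles_isPart horb₁ hstab₀ n
  obtain ⟨B, hB⟩ := exists_forall_hasFilling_of_finite hZfin fun z hz => hexact z (hZ z hz).1
  have hpeel : ∀ m ≤ n, ∀ x, ψ x = 0 → l1 x ≤ m → HasFilling φ (m * B) x := by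
    intro m
    induction m with
    | zero => exact fun _ x _ hx => l1_eq_zero.1 (Nat.le_zero.1 hx) ▸ HasFilling.zero φ _
    | succ m ih =>
      intro hmn x hx hxm
      obtain rfl | hx₀ := eq_or_ne x 0
      · exact HasFilling.zero φ _
      obtain ⟨g, z, hz, hzx⟩ := hpart x hx hx₀ (hxm.trans hmn)
      have hrest : ψ (x - gact g z) = 0 := by rw [map_sub, hψ, (hZ z hz).1, gact_zero, hx, sub_zero]
      have hpos : 0 < l1 (gact g z) :=
        (l1_gact g z).symm ▸ Nat.pos_of_ne_zero (l1_eq_zero.not.2 (hZ z hz).2)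
      have hlt : l1 (x - gact g z) ≤ m := by have := hzx.l1_sub_add_l1; omega
      have hfill := (ih (by omega) _ hrest hlt).add ((hB z hz).gact hφ g)
      rwa [sub_add_cancel, ← Nat.succ_mul] at hfill
  exact ⟨n * B, hpeel n le_rfl⟩

/-- Finiteness of the (d+1)-dimensional filling function of a module of type
`FP_{d+1}`, expressed via two consecutive maps of a partial free resolution:
`ℤ[S₂] → ℤ[S₁] → ℤ[S₀]` with free G-sets with finitely many orbits, `ψ ∘ φ = 0`
and `ker ψ ⊆ im φ`.  Every `ψ`-cycle of ℓ1-norm at most `n` has a `φ`-filling of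
ℓ1-norm at most `B = B(n)`. -/
theorem stmt_0 {G S₂ S₁ S₀ : Type*} [Group G]
    [MulAction G S₂] [MulAction G S₁] [MulAction G S₀]
    (hfree₂ : ∀ g : G, g ≠ 1 → ∀ s : S₂, g • s ≠ s)
    (hfree₁ : ∀ g : G, g ≠ 1 → ∀ s : S₁, g • s ≠ s)
    (hfree₀ : ∀ g : G, g ≠ 1 → ∀ s : S₀, g • s ≠ s)
    (horb₂ : FinitelyManyOrbits G S₂) (horb₁ : FinitelyManyOrbits G S₁)
    (horb₀ : FinitelyManyOrbits G S₀)
    (φ : (S₂ →₀ ℤ) →+ (S₁ →₀ ℤ)) (ψ : (S₁ →₀ ℤ) →+ (S₀ →₀ ℤ))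
    (hφ : Equivariant G φ) (hψ : Equivariant G ψ)
    (hcomp : ∀ y : S₂ →₀ ℤ, ψ (φ y) = 0)
    (hexact : ∀ x : S₁ →₀ ℤ, ψ x = 0 → ∃ y : S₂ →₀ ℤ, φ y = x) :
    ∀ n : ℕ, ∃ B : ℕ, ∀ x : S₁ →₀ ℤ, ψ x = 0 → l1 x ≤ n →
      ∃ y : S₂ →₀ ℤ, φ y = x ∧ l1 y ≤ B := by
  exact stmt_0_general (.of_free hfree₀) horb₁ φ ψ hφ hψ hexact
end

section
/- Let G be a group, S and T G-sets, and ρ : ℤ[S] → ℤ[T] a G-equivariant additive homomorphism. If z ∈ ker ρ and z ≠ 0, then there exists x ∈ ℤ[S] such that: (1) x ⪯_S z (in particular ‖z − x‖_S < ‖z‖_S); (2) x ∈ ker ρ; and (3) x is ρ-connected. -/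
open Finsupp

/-!
Among the `ρ`-connected parts `x` of `z`, take one with `‖z - x‖` minimal; one exists, since any
signed basis element of `z` is such a part. If `ρ x t ≠ 0` for some `t`, then
`ρ (z - x) t = -ρ x t`, so some signed basis elements `w` of `x` and `y` of `z - x` have images
with opposite signs at `t`. Hence `x + y` is a `ρ`-connected part of `z` with
`‖z - (x + y)‖ < ‖z - x‖`, against minimality.
-/

section Parts

theorem sq_le_mul_iff_mem_uIcc {R : Type*} [Ring R] [LinearOrder R] [IsStrictOrderedRing R]
    {a b : R} : a ^ 2 ≤ a * b ↔ a ∈ Set.uIcc 0 b := by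
  rw [← sub_nonneg, sq, ← mul_sub, mul_nonneg_iff, sub_nonneg, sub_nonpos, Set.mem_uIcc,
    and_comm (a := a ≤ 0)]

variable {S : Type*} {x y z : S →₀ ℤ}

theorem isPart_iff : IsPart x z ↔ ∀ s, 0 ≤ x s ∧ x s ≤ z s ∨ z s ≤ x s ∧ x s ≤ 0 := by
  simp only [IsPart, sq_le_mul_iff_mem_uIcc, Set.mem_uIcc]

theorem IsPart.refl (x : S →₀ ℤ) : IsPart x x := fun s => (sq (x s)).le

theorem IsPart.add (hx : IsPart x z) (hy : IsPart y (z - x)) : IsPart (x + y) z := by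
  rw [isPart_iff] at *
  intro s
  have hxs := hx s
  have hys := hy s
  simp only [Finsupp.sub_apply, Finsupp.add_apply] at *
  omega

theorem IsPart.sIntTrivial (hx : IsPart x z) (hy : IsPart y (z - x)) : SIntTrivial x y := by
  rw [isPart_iff] at *
  intro s
  have hxs := hx s
  have hys := hy s
  simp only [Finsupp.sub_apply] at hys
  rw [mul_nonneg_iff]
  omega

theorem IsPart.l1_add_l1_sub (h : IsPart x z) : l1 x + l1 (z - x) = l1 z := by
  rw [isPart_iff] at h
  have support_subset : x.support ⊆ z.support := fun s => by
    have := h s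
    simp only [Finsupp.mem_support_iff]
    omega
  have support_sub_subset : (z - x).support ⊆ z.support := fun s => by
    have := h s
    simp only [Finsupp.mem_support_iff, Finsupp.sub_apply]
    omega
  calc l1 x + l1 (z - x)
      = ∑ s ∈ z.support, (x s).natAbs + ∑ s ∈ z.support, ((z - x) s).natAbs := congrArg₂ (· + ·)
        (Finsupp.sum_of_support_subset x support_subset (fun _ a => a.natAbs) (by simp))
        (Finsupp.sum_of_support_subset (z - x) support_sub_subset (fun _ a => a.natAbs) (by simp))
    _ = ∑ s ∈ z.support, ((x s).natAbs + ((z - x) s).natAbs) := Finset.sum_add_distrib.symm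
    _ = l1 z := Finset.sum_congr rfl fun s _ => by
        have := h s
        rw [Finsupp.sub_apply]
        omega

theorem l1_pos (hx : x ≠ 0) : 0 < l1 x :=
  Finset.sum_pos (fun _ hs => Int.natAbs_pos.mpr (Finsupp.mem_support_iff.mp hs))
    (Finsupp.support_nonempty_iff.mpr hx)

theorem IsPart.l1_sub_lt (h : IsPart x z) (hx : x ≠ 0) : l1 (z - x) < l1 z := by
  have := h.l1_add_l1_sub
  have := l1_pos hx
  omega

end Parts

section SignedBasis

variable {S : Type*} {x z : S →₀ ℤ}

theorem InD1.ne_zero (hx : InD1 x) : x ≠ 0 := by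
  obtain ⟨s, rfl | rfl⟩ := hx <;> simp

theorem inD1_single_sign {s : S} {a : ℤ} (ha : a ≠ 0) : InD1 (single s a.sign) := by
  rcases ha.lt_or_gt with ha | ha
  · exact ⟨s, .inr (by rw [Int.sign_eq_neg_one_of_neg ha])⟩
  · exact ⟨s, .inl (by rw [Int.sign_eq_one_of_pos ha])⟩

theorem isPart_single_sign (z : S →₀ ℤ) (s : S) : IsPart (single s (z s).sign) z := by
  rw [isPart_iff]
  intro t
  by_cases hst : s = t
  · subst hst
    rw [Finsupp.single_eq_same]
    rcases lt_trichotomy (z s) 0 with h | h | h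
    · rw [Int.sign_eq_neg_one_of_neg h]
      omega
    · simp [h]
    · rw [Int.sign_eq_one_of_pos h]
      omega
  · rw [Finsupp.single_eq_of_ne' hst]
    omega

theorem exists_inD1_isPart (hz : z ≠ 0) : ∃ y, InD1 y ∧ IsPart y z := by
  obtain ⟨s, hs⟩ := Finsupp.ne_iff.mp hz
  exact ⟨single s (z s).sign, inD1_single_sign hs, isPart_single_sign z s⟩

theorem sum_natAbs_nsmul_single_sign (x : S →₀ ℤ) :
    ∑ s ∈ x.support, (x s).natAbs • single s (x s).sign = x := by
  conv_rhs => rw [← x.sum_single]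
  refine Finset.sum_congr rfl fun s _ => ?_
  rw [Finsupp.smul_single, nsmul_eq_mul, mul_comm, Int.sign_mul_natAbs]

theorem exists_inD1_isPart_map_pos {A : Type*} [AddCommMonoid A] [LinearOrder A]
    [IsOrderedAddMonoid A] (φ : (S →₀ ℤ) →+ A) (hx : 0 < φ x) :
    ∃ y, InD1 y ∧ IsPart y x ∧ 0 < φ y := by
  by_contra! h
  refine hx.not_ge ?_
  rw [← sum_natAbs_nsmul_single_sign x, map_sum]
  refine Finset.sum_nonpos fun s hs => ?_
  rw [map_nsmul]
  exact nsmul_nonpos (h _ (inD1_single_sign (Finsupp.mem_support_iff.mp hs))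
    (isPart_single_sign x s)) _

end SignedBasis

section RhoConnected

variable {S T : Type*} {ρ : (S →₀ ℤ) →+ (T →₀ ℤ)} {x y z : S →₀ ℤ}

theorem exists_inD1_isPart_map_mul_map_pos {t : T} (hx : ρ x t ≠ 0) :
    ∃ y, InD1 y ∧ IsPart y x ∧ 0 < ρ x t * ρ y t :=
  exists_inD1_isPart_map_pos
    ((AddMonoidHom.mulLeft (ρ x t)).comp ((Finsupp.applyAddHom t).comp ρ)) (mul_self_pos.mpr hx)

theorem exists_inD1_isPart_rhoInt {t : T} (h : ρ x t * ρ z t < 0) :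
    ∃ y, InD1 y ∧ IsPart y z ∧ RhoInt ρ x y := by
  obtain ⟨w, hw, hwx, hwt⟩ := exists_inD1_isPart_map_mul_map_pos (left_ne_zero_of_mul h.ne)
  obtain ⟨y, hy, hyz, hyt⟩ := exists_inD1_isPart_map_mul_map_pos (right_ne_zero_of_mul h.ne)
  have opposite_signs : ρ w t * ρ y t < 0 := by
    refine (neg_iff_neg_of_mul_pos ?_).mp h
    rw [mul_mul_mul_comm]
    exact mul_pos hwt hyt
  exact ⟨y, hy, hyz, w, y, hw, hy, hwx, .refl y, t, opposite_signs⟩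

theorem InD1.rhoConnected (hx : InD1 x) : RhoConnected ρ x :=
  ⟨1, le_rfl, fun _ => x, fun _ _ => hx, by simp, fun _ _ _ => by omega⟩

theorem InD.add {n : ℕ} (hx : InD ρ n x) (hy : InD1 y) (hS : SIntTrivial x y)
    (hρ : RhoInt ρ x y) : InD ρ (n + 1) (x + y) := by
  obtain ⟨c, hc, rfl, hstep⟩ := hx
  have sum_update : ∀ k ≤ n,
      ∑ i ∈ Finset.range k, Function.update c n y i = ∑ i ∈ Finset.range k, c i := fun k hk =>
    Finset.sum_congr rfl fun i hi =>
      Function.update_of_ne ((Finset.mem_range.mp hi).trans_le hk).ne y c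
  refine ⟨Function.update c n y, fun i hi => ?_, ?_, fun k hk₁ hk => ?_⟩
  · obtain hi | rfl := Nat.lt_succ_iff_lt_or_eq.mp hi
    · rw [Function.update_of_ne hi.ne]
      exact hc i hi
    · rwa [Function.update_self]
  · rw [Finset.sum_range_succ, sum_update n le_rfl, Function.update_self]
  · rw [sum_update k (Nat.lt_succ_iff.mp hk)]
    obtain hk | rfl := Nat.lt_succ_iff_lt_or_eq.mp hk
    · rw [Function.update_of_ne hk.ne]
      exact hstep k hk₁ hk
    · rw [Function.update_self]
      exact ⟨hS, hρ⟩

theorem RhoConnected.add (hx : RhoConnected ρ x) (hy : InD1 y) (hS : SIntTrivial x y)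
    (hρ : RhoInt ρ x y) : RhoConnected ρ (x + y) := by
  obtain ⟨n, -, hn⟩ := hx
  exact ⟨n + 1, n.succ_pos, hn.add hy hS hρ⟩

theorem RhoConnected.exists_isPart_l1_sub_lt (hx : RhoConnected ρ x) (hxz : IsPart x z)
    (hz : ρ z = 0) (hρx : ρ x ≠ 0) :
    ∃ x', IsPart x' z ∧ RhoConnected ρ x' ∧ l1 (z - x') < l1 (z - x) := by
  obtain ⟨t, ht⟩ : ∃ t, ρ x t ≠ 0 := Finsupp.ne_iff.mp hρx
  have opposite_signs : ρ x t * ρ (z - x) t < 0 := by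
    rw [map_sub, hz, zero_sub, Finsupp.neg_apply, mul_neg, neg_lt_zero]
    exact mul_self_pos.mpr ht
  obtain ⟨y, hy, hyzx, hxy⟩ := exists_inD1_isPart_rhoInt opposite_signs
  refine ⟨x + y, hxz.add hyzx, hx.add hy (hxz.sIntTrivial hyzx) hxy, ?_⟩
  rw [← sub_sub]
  exact hyzx.l1_sub_lt hy.ne_zero

end RhoConnected

theorem stmt_3_general {S T : Type*} (ρ : (S →₀ ℤ) →+ (T →₀ ℤ)) (z : S →₀ ℤ) (hz : ρ z = 0)
    (hz0 : z ≠ 0) :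
    ∃ x : S →₀ ℤ, (IsPart x z ∧ l1 (z - x) < l1 z) ∧ ρ x = 0 ∧ RhoConnected ρ x := by
  obtain ⟨y, hy, hyz⟩ := exists_inD1_isPart hz0
  obtain ⟨x, ⟨hxz, hx⟩, hmin⟩ := exists_minimalFor_of_wellFoundedLT
    (fun x => IsPart x z ∧ RhoConnected ρ x) (fun x => l1 (z - x)) ⟨y, hyz, hy.rhoConnected⟩
  have minimal : ∀ x', IsPart x' z → RhoConnected ρ x' → l1 (z - x) ≤ l1 (z - x') :=
    fun x' hx'z hx' => (le_total _ _).elim id (hmin ⟨hx'z, hx'⟩)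
  refine ⟨x, ⟨hxz, ?_⟩, ?_, hx⟩
  · exact (minimal y hyz hy.rhoConnected).trans_lt (hyz.l1_sub_lt hy.ne_zero)
  · by_contra hρx
    obtain ⟨x', hx'z, hx', hlt⟩ := hx.exists_isPart_l1_sub_lt hxz hz hρx
    exact hlt.not_ge (minimal x' hx'z hx')

/-- Lemma 4: every nonzero kernel element has a ρ-connected part in the kernel. -/
theorem stmt_3 {G S T : Type*} [Group G] [MulAction G S] [MulAction G T]
    (ρ : (S →₀ ℤ) →+ (T →₀ ℤ)) (hρ : Equivariant G ρ)
    (z : S →₀ ℤ) (hz : ρ z = 0) (hz0 : z ≠ 0) :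
    ∃ x : S →₀ ℤ, (IsPart x z ∧ l1 (z - x) < l1 z) ∧ ρ x = 0 ∧ RhoConnected ρ x :=
  stmt_3_general ρ z hz hz0
end
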